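/- Let μ ≥ 0 and λ ≥ 1 be real, assume M₃ ≠ 0 and Θ ≠ 0, let f belong to the class S*_{Σ,q}^η(μ,λ;φ), and let ϱ ∈ ℝ. Then a₃ − ϱ·a₂² = E₁·[ (2(1−ϱ)·E₁²·(λ[3]_q − 1)·M₃·L₃ + Θ)·c₂ + (2(1−ϱ)·E₁²·(λ[3]_q − 1)·M₃·L₃ − Θ)·d₂ ] / (4(λ[3]_q − 1)·M₃·L₃·Θ). -/

import Mathlib

open Complex Metric Set

noncomputable def symQ (q x : ℝ) : ℝ := (Real.rpow q x - Real.rpow q (-x)) / (q - q⁻¹)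

noncomputable def Dq (q : ℝ) (f : ℂ → ℂ) (z : ℂ) : ℂ :=
  if z = 0 then deriv f 0
  else (f ((q : ℂ) * z) - f (z / (q : ℂ))) / (((q : ℂ) - (q : ℂ)⁻¹) * z)

def IsSchwarz (u : ℂ → ℂ) : Prop :=
  AnalyticOnNhd ℂ u (ball 0 1) ∧ u 0 = 0 ∧ ∀ z ∈ ball (0 : ℂ) 1, u z ∈ ball (0 : ℂ) 1

noncomputable def taylorCoeff (h : ℂ → ℂ) (n : ℕ) : ℂ := iteratedDeriv n h 0 / (n.factorial : ℂ)

noncomputable def Lcoef (q η : ℝ) (n : ℕ) : ℝ := symQ q (1 + η) / symQ q ((n : ℝ) + η)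

noncomputable def Jop (q η : ℝ) (h : ℂ → ℂ) (z : ℂ) : ℂ :=
  ∑' n, (Lcoef q η n : ℂ) * taylorCoeff h n * z ^ n

noncomputable def Phi (q η lam mu : ℝ) (h : ℂ → ℂ) (z : ℂ) : ℂ :=
  (2 * z * Dq q (Jop q η h) z ^ (lam : ℂ) / (Jop q η h z - Jop q η h (-z))) ^ (mu : ℂ) *
    (2 * Dq q (fun ζ => ζ * Dq q (Jop q η h) ζ) z ^ (lam : ℂ) /
        Dq q (fun ζ => Jop q η h ζ - Jop q η h (-ζ)) z) ^ ((1 - mu : ℝ) : ℂ)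

noncomputable def M2v (q mu : ℝ) : ℝ := mu - (mu - 1) * symQ q 2
noncomputable def M3v (q mu : ℝ) : ℝ := mu - (mu - 1) * symQ q 3
noncomputable def N2v (q mu : ℝ) : ℝ := mu - (mu - 1) * symQ q 2 ^ 2

noncomputable def Omegav (q η lam mu : ℝ) : ℝ :=
  2 * (lam * symQ q 3 - 1) * M3v q mu * Lcoef q η 3 +
    lam * (lam * M2v q mu ^ 2 - N2v q mu) * symQ q 2 ^ 2 * Lcoef q η 2 ^ 2

noncomputable def Thetav (q η lam mu E1 : ℝ) (E : ℕ → ℂ) : ℂ :=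
  ((2 * (lam * symQ q 3 - 1) * M3v q mu * E1 ^ 2 * Lcoef q η 3 : ℝ) : ℂ) +
    (lam : ℂ) * (((lam * M2v q mu ^ 2 : ℝ) : ℂ) * (((E1 ^ 2 + 2 * E1 : ℝ) : ℂ) - 2 * E 2) -
        ((N2v q mu * E1 ^ 2 : ℝ) : ℂ)) * ((symQ q 2 ^ 2 * Lcoef q η 2 ^ 2 : ℝ) : ℂ)

noncomputable def Gammav (q η lam : ℝ) : ℝ :=
  2 * (lam * symQ q 3 - 1) * Lcoef q η 3 + lam * (lam - 1) * symQ q 2 ^ 2 * Lcoef q η 2 ^ 2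

noncomputable def Xiv (q η lam E1 : ℝ) (E : ℕ → ℂ) : ℂ :=
  ((2 * (lam * symQ q 3 - 1) * E1 ^ 2 * Lcoef q η 3 : ℝ) : ℂ) +
    (lam : ℂ) * ((((lam - 1) * E1 ^ 2 : ℝ) : ℂ) + 2 * (lam : ℂ) * ((E1 : ℂ) - E 2)) *
      ((symQ q 2 ^ 2 * Lcoef q η 2 ^ 2 : ℝ) : ℂ)

noncomputable def Psiv (q η lam : ℝ) : ℝ :=
  2 * (lam * symQ q 3 - 1) * symQ q 3 * Lcoef q η 3 +
    lam * (lam - 1) * symQ q 2 ^ 4 * Lcoef q η 2 ^ 2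

noncomputable def Upsv (q η lam E1 : ℝ) (E : ℕ → ℂ) : ℂ :=
  ((2 * (lam * symQ q 3 - 1) * symQ q 3 * E1 ^ 2 * Lcoef q η 3 : ℝ) : ℂ) +
    (lam : ℂ) * ((((lam - 1) * E1 ^ 2 : ℝ) : ℂ) + 2 * (lam : ℂ) * ((E1 : ℂ) - E 2)) *
      ((symQ q 2 ^ 4 * Lcoef q η 2 ^ 2 : ℝ) : ℂ)

/-!
Compare the expansions up to `z²` of `Φ_f = φ ∘ u` and `Φ_g = φ ∘ v`. For the inverse `g` of `f`
the coefficients are `b₂ = -a₂` and `b₃ = 2 a₂² - a₃`, so the first-order relations force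
`d₁ = -c₁`. The sum of the two second-order relations is then free of `a₃` and determines
`Θ a₂²`, while their difference is free of `c₁` and determines `a₃ - a₂²`.
-/

open Filter Topology Asymptotics FormalMultilinearSeries

section Polynomial

variable {𝕜 : Type*} [NontriviallyNormedField 𝕜]

lemma tendsto_sub_nhdsNE (x : 𝕜) : Tendsto (fun z => z - x) (𝓝[≠] x) (𝓝 0) := by
  have h : Continuous fun z => z - x := by fun_prop
  simpa using h.continuousWithinAt.tendsto (x := x) (s := {x}ᶜ)

lemma tendsto_quadratic (x a b c : 𝕜) :
    Tendsto (fun z => a + b * (z - x) + c * (z - x) ^ 2) (𝓝[≠] x) (𝓝 a) := by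
  have h : Continuous fun z => a + b * (z - x) + c * (z - x) ^ 2 := by fun_prop
  simpa using h.continuousWithinAt.tendsto (x := x) (s := {x}ᶜ)

lemma eq_zero_of_quadratic_isLittleO {x a b c : 𝕜}
    (h : (fun z => a + b * (z - x) + c * (z - x) ^ 2) =o[𝓝[≠] x] fun z => (z - x) ^ 2) :
    a = 0 ∧ b = 0 ∧ c = 0 := by
  have ht := tendsto_sub_nhdsNE x
  have hne : ∀ᶠ z in 𝓝[≠] x, z - x ≠ 0 := by
    filter_upwards [self_mem_nhdsWithin] with z hz using sub_ne_zero.2 hz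
  obtain rfl : a = 0 := tendsto_nhds_unique (tendsto_quadratic x a b c)
    (h.trans_tendsto (by simpa using ht.pow 2))
  have hb : Tendsto (fun z => b + c * (z - x)) (𝓝[≠] x) (𝓝 0) := by
    have hlin : (fun z => b + c * (z - x)) =o[𝓝[≠] x] fun z => z - x :=
      (h.mul_isBigO (isBigO_refl (fun z => (z - x)⁻¹) _)).congr'
        (by filter_upwards [hne] with z hz; field_simp; ring)
        (by filter_upwards [hne] with z hz; field_simp)
    exact hlin.trans_tendsto ht
  obtain rfl : b = 0 :=
    tendsto_nhds_unique (by simpa using tendsto_quadratic x b c 0) hb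
  have hc : Tendsto (fun _ => c) (𝓝[≠] x) (𝓝 0) :=
    h.tendsto_div_nhds_zero.congr' (by filter_upwards [hne] with z hz; field_simp; ring)
  exact ⟨rfl, rfl, tendsto_nhds_unique tendsto_const_nhds hc⟩

end Polynomial

/-- The expansion `f z = a + b (z - x) + c (z - x)² + o((z - x)²)` as `z → x` with `z ≠ x`. The
value `f x` is left free because the quotients to be expanded take junk values at `x`. -/
def HasQuadraticExpansionAt {𝕜 : Type*} [NontriviallyNormedField 𝕜] (f : 𝕜 → 𝕜)
    (x a b c : 𝕜) : Prop :=
  (fun z => f z - (a + b * (z - x) + c * (z - x) ^ 2)) =o[𝓝[≠] x] fun z => (z - x) ^ 2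

namespace HasQuadraticExpansionAt

variable {𝕜 : Type*} [NontriviallyNormedField 𝕜] {f g : 𝕜 → 𝕜} {x a b c a' b' c' : 𝕜}

protected lemma tendsto (hf : HasQuadraticExpansionAt f x a b c) :
    Tendsto f (𝓝[≠] x) (𝓝 a) := by
  have hrem := hf.trans_tendsto (by simpa using (tendsto_sub_nhdsNE x).pow 2)
  simpa using hrem.add (tendsto_quadratic x a b c)

lemma congr (hf : HasQuadraticExpansionAt f x a b c) (hfg : f =ᶠ[𝓝[≠] x] g) :
    HasQuadraticExpansionAt g x a b c :=
  IsLittleO.congr' hf (hfg.sub .rfl) .rfl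

protected lemma unique (h : HasQuadraticExpansionAt f x a b c)
    (h' : HasQuadraticExpansionAt f x a' b' c') : a = a' ∧ b = b' ∧ c = c' := by
  have hdiff : (fun z => (a' - a) + (b' - b) * (z - x) + (c' - c) * (z - x) ^ 2) =o[𝓝[≠] x]
      fun z => (z - x) ^ 2 := (h.sub h').congr_left fun z => by ring
  obtain ⟨ha, hb, hc⟩ := eq_zero_of_quadratic_isLittleO hdiff
  exact ⟨(sub_eq_zero.1 ha).symm, (sub_eq_zero.1 hb).symm, (sub_eq_zero.1 hc).symm⟩

protected lemma const (a x : 𝕜) : HasQuadraticExpansionAt (fun _ => a) x a 0 0 := by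
  simp [HasQuadraticExpansionAt]

protected lemma add (hf : HasQuadraticExpansionAt f x a b c)
    (hg : HasQuadraticExpansionAt g x a' b' c') :
    HasQuadraticExpansionAt (fun z => f z + g z) x (a + a') (b + b') (c + c') :=
  (IsLittleO.add hf hg).congr_left fun z => by ring

lemma of_sub_isLittleO (hf : HasQuadraticExpansionAt f x a b c)
    (hgf : (fun z => g z - f z) =o[𝓝[≠] x] fun z => (z - x) ^ 2) :
    HasQuadraticExpansionAt g x a b c :=
  (hgf.add hf).congr_left fun z => by ring

lemma quartic (x a b c d e : 𝕜) :
    HasQuadraticExpansionAt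
      (fun z => a + b * (z - x) + (c + d * (z - x) + e * (z - x) ^ 2) * (z - x) ^ 2) x a b c := by
  have hhigher : Tendsto (fun z => 0 + d * (z - x) + e * (z - x) ^ 2) (𝓝[≠] x) (𝓝 0) :=
    tendsto_quadratic x 0 d e
  exact (((isLittleO_one_iff 𝕜).2 hhigher).mul_isBigO
    (isBigO_refl (fun z => (z - x) ^ 2) _)).congr (fun z => by ring) fun z => one_mul _

protected lemma mul (hf : HasQuadraticExpansionAt f x a b c)
    (hg : HasQuadraticExpansionAt g x a' b' c') :
    HasQuadraticExpansionAt (fun z => f z * g z) x (a * a') (a * b' + b * a')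
      (a * c' + b * b' + c * a') := by
  have hfg := IsLittleO.mul_isBigO hf (hg.tendsto.isBigO_one 𝕜)
  have hpg := ((tendsto_quadratic x a b c).isBigO_one 𝕜).mul_isLittleO hg
  simp only [one_mul, mul_one] at hfg hpg
  refine (quartic x (a * a') (a * b' + b * a') (a * c' + b * b' + c * a') (b * c' + c * b')
    (c * c')).of_sub_isLittleO ?_
  exact (hfg.add hpg).congr_left fun z => by ring

lemma const_mul (k : 𝕜) (hf : HasQuadraticExpansionAt f x a b c) :
    HasQuadraticExpansionAt (fun z => k * f z) x (k * a) (k * b) (k * c) := by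
  simpa using (HasQuadraticExpansionAt.const k x).mul hf

protected lemma div {α β γ : 𝕜} (hf : HasQuadraticExpansionAt f x a b c)
    (hg : HasQuadraticExpansionAt g x a' b' c') (ha' : a' ≠ 0) (hα : α * a' = a)
    (hβ : α * b' + β * a' = b) (hγ : α * c' + β * b' + γ * a' = c) :
    HasQuadraticExpansionAt (fun z => f z / g z) x α β γ := by
  have hquot := quartic x α β γ 0 0
  have hnum := hf.add ((hquot.mul hg).const_mul (-1))
  simp only [hα, hβ, hγ, neg_one_mul, add_neg_cancel] at hnum
  have hrem := IsLittleO.mul_isBigO hnum ((hg.tendsto.inv₀ ha').isBigO_one 𝕜)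
  refine hquot.of_sub_isLittleO (hrem.congr' ?_ (by simp))
  filter_upwards [hg.tendsto.eventually_ne ha'] with z hz
  field_simp
  ring

protected lemma comp {p₀ p₁ p₂ : 𝕜} (hg : HasQuadraticExpansionAt g a p₀ p₁ p₂) (hga : g a = p₀)
    (hf : HasQuadraticExpansionAt f x a b c) :
    HasQuadraticExpansionAt (fun z => g (f z)) x p₀ (p₁ * b) (p₁ * c + p₂ * b ^ 2) := by
  have hsub : HasQuadraticExpansionAt (fun z => f z - a) x 0 b c := by
    simpa [sub_eq_add_neg] using hf.add (.const (-a) x)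
  have hsq : HasQuadraticExpansionAt (fun z => (f z - a) ^ 2) x 0 0 (b ^ 2) := by
    simpa [sq] using hsub.mul hsub
  have hsqO : (fun z => (f z - a) ^ 2) =O[𝓝[≠] x] fun z => (z - x) ^ 2 :=
    (hsq.isBigO.add ((isBigO_refl _ _).const_mul_left (b ^ 2))).congr_left fun z => by ring
  have hgnhds : (fun w => g w - (p₀ + p₁ * (w - a) + p₂ * (w - a) ^ 2)) =o[𝓝 a]
      fun w => (w - a) ^ 2 := by
    simpa using IsLittleO.insert hg (by simp [hga])
  have hpoly := ((HasQuadraticExpansionAt.const p₀ x).add (hsub.const_mul p₁)).add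
    (hsq.const_mul p₂)
  have hrem := (hgnhds.comp_tendsto hf.tendsto).trans_isBigO hsqO
  simpa using hpoly.of_sub_isLittleO hrem

lemma comp_const_mul {k : 𝕜} (hk : k ≠ 0) (hf : HasQuadraticExpansionAt f (k * x) a b c) :
    HasQuadraticExpansionAt (fun z => f (k * z)) x a (k * b) (k ^ 2 * c) := by
  have hlim : Tendsto (fun z => k * z) (𝓝[≠] x) (𝓝[≠] (k * x)) :=
    (continuous_const_mul k).continuousWithinAt.tendsto_nhdsWithin fun z hz => by
      simpa [hk] using hz
  refine ((IsLittleO.comp_tendsto hf hlim).congr_left fun z => ?_).trans_isBigO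
    (((isBigO_refl _ _).const_mul_left (k ^ 2)).congr_left fun z => ?_)
  all_goals simp only [Function.comp_apply]; ring

lemma of_hasFPowerSeriesAt {p : FormalMultilinearSeries 𝕜 𝕜 𝕜} (hf : HasFPowerSeriesAt f p x) :
    HasQuadraticExpansionAt f x (p.coeff 0) (p.coeff 1) (p.coeff 2) := by
  have htaylor := (hf.isBigO_sub_partialSum_pow 3).comp_tendsto (tendsto_sub_nhdsNE x)
  have hcube : (fun z => ‖z - x‖ ^ 3) =o[𝓝[≠] x] fun z => (z - x) ^ 2 := by
    have h := (isLittleO_pow_pow (𝕜 := 𝕜) (by norm_num : 2 < 3)).comp_tendsto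
      (tendsto_sub_nhdsNE x)
    simpa [Function.comp_def] using h.norm_left
  refine (htaylor.trans_isLittleO hcube).congr_left fun z => ?_
  simp [FormalMultilinearSeries.partialSum, Finset.sum_range_succ, mul_comm]

lemma dslope_of_hasFPowerSeriesAt {p : FormalMultilinearSeries 𝕜 𝕜 𝕜}
    (hf : HasFPowerSeriesAt f p x) :
    HasQuadraticExpansionAt (dslope f x) x (p.coeff 1) (p.coeff 2) (p.coeff 3) := by
  simpa using of_hasFPowerSeriesAt hf.has_fpower_series_dslope_fslope

lemma slope_sub_comp_neg (hf : HasQuadraticExpansionAt (slope f 0) 0 a b c) :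
    HasQuadraticExpansionAt (slope (fun ζ => f ζ - f (-ζ)) 0) 0 (2 * a) 0 (2 * c) := by
  have hneg : HasQuadraticExpansionAt (fun z => slope f 0 (-1 * z)) 0 a (-1 * b) ((-1) ^ 2 * c) :=
    comp_const_mul (neg_ne_zero.2 one_ne_zero) (by simpa using hf)
  have hodd : (fun z => slope f 0 z + slope f 0 (-1 * z)) = slope (fun ζ => f ζ - f (-ζ)) 0 := by
    funext z
    simp only [slope_def_field, neg_one_mul, neg_zero, sub_zero, sub_self, div_neg]
    ring
  convert hodd ▸ hf.add hneg using 1 <;> ring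

lemma of_cayley [NeZero (2 : 𝕜)] {c₁ c₂ : 𝕜}
    (h : HasQuadraticExpansionAt (fun z => (1 + f z) / (1 - f z)) x 1 c₁ c₂) :
    HasQuadraticExpansionAt f x 0 (c₁ / 2) (c₂ / 2 - c₁ ^ 2 / 4) := by
  have h2 : (2 : 𝕜) ≠ 0 := two_ne_zero
  have h4 : (4 : 𝕜) = 2 * 2 := by norm_num
  have hnum := h.add (.const (-1) x)
  have hden := h.add (.const 1 x)
  rw [one_add_one_eq_two] at hden
  refine (hnum.div hden h2 (by ring) (by field_simp; ring)
    (by rw [h4]; field_simp; ring)).congr ?_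
  filter_upwards [h.tendsto.eventually_ne one_ne_zero] with z hz
  have hfz : 1 - f z ≠ 0 := (div_ne_zero_iff.1 hz).2
  have hsum : (1 + f z) / (1 - f z) + 1 = 2 / (1 - f z) := by field_simp; ring
  rw [hsum]
  field_simp
  ring

protected lemma cpow {f : ℂ → ℂ} {x b c : ℂ} (hf : HasQuadraticExpansionAt f x 1 b c) (k : ℂ) :
    HasQuadraticExpansionAt (fun z => f z ^ k) x 1 (k * b)
      (k * c + k * (k - 1) / 2 * b ^ 2) := by
  have hchoose : Ring.choose k 2 = k * (k - 1) / 2 := by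
    simp only [Ring.choose_eq_smul, descPochhammer_succ_right, descPochhammer_zero,
      Polynomial.smeval_mul, Polynomial.smeval_sub, Polynomial.smeval_X,
      Polynomial.smeval_natCast, Nat.factorial_two, smul_eq_mul, Nat.cast_ofNat, pow_zero, one_smul,
      pow_one, zero_nsmul, sub_zero, one_mul]
    ring
  have hpow : HasQuadraticExpansionAt (fun w : ℂ => w ^ k) 1 1 k (k * (k - 1) / 2) := by
    simpa [binomialSeries, hchoose] using
      of_hasFPowerSeriesAt (one_add_cpow_hasFPowerSeriesAt_zero (a := k) |>.comp_sub 1)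
  exact hpow.comp (one_cpow k) hf

lemma two_mul_cpow_div {D K : ℂ → ℂ} {x d₁ d₂ k₂ : ℂ}
    (hD : HasQuadraticExpansionAt D x 1 d₁ d₂) (hK : HasQuadraticExpansionAt K x 2 0 k₂) (s : ℂ) :
    HasQuadraticExpansionAt (fun z => 2 * D z ^ s / K z) x 1 (s * d₁)
      (s * d₂ + s * (s - 1) / 2 * d₁ ^ 2 - k₂ / 2) :=
  ((hD.cpow s).const_mul 2).div hK two_ne_zero (by ring) (by ring) (by ring)

end HasQuadraticExpansionAt

section PowerSeries

variable {𝕜 : Type*} [NontriviallyNormedField 𝕜]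

lemma coeff_relations_of_leftInverse {f g : 𝕜 → 𝕜} {x : 𝕜}
    {p r : FormalMultilinearSeries 𝕜 𝕜 𝕜}
    (hf : HasFPowerSeriesAt f p x) (hg : HasFPowerSeriesAt g r (f x))
    (hgf : ∀ᶠ z in 𝓝 x, g (f z) = z) :
    r.coeff 1 * p.coeff 1 = 1 ∧
      r.coeff 1 * p.coeff 2 + r.coeff 2 * p.coeff 1 ^ 2 = 0 ∧
      r.coeff 1 * p.coeff 3 + 2 * r.coeff 2 * p.coeff 1 * p.coeff 2 +
        r.coeff 3 * p.coeff 1 ^ 3 = 0 := by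
  have hgx : g (f x) = x := hgf.self_of_nhds
  have hf0 : p.coeff 0 = f x := hf.coeff_zero 1
  have hdg : dslope g (f x) (f x) = r.coeff 1 := by rw [dslope_same, hg.deriv]; rfl
  have hfx := HasQuadraticExpansionAt.of_hasFPowerSeriesAt hf
  rw [hf0] at hfx
  have hprod := ((HasQuadraticExpansionAt.dslope_of_hasFPowerSeriesAt hg).comp hdg hfx).mul
    (.dslope_of_hasFPowerSeriesAt hf)
  have hone : (fun z => dslope g (f x) (f z) * dslope f x z) =ᶠ[𝓝[≠] x] fun _ => 1 := by
    filter_upwards [self_mem_nhdsWithin, nhdsWithin_le_nhds hgf] with z hz hgfz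
    have hgslope := sub_smul_dslope g (f x) (f z)
    have hfslope := sub_smul_dslope f x z
    simp only [smul_eq_mul] at hgslope hfslope
    rw [← hfslope, hgfz, hgx] at hgslope
    exact mul_left_cancel₀ (sub_ne_zero.2 hz) (by linear_combination hgslope)
  obtain ⟨h₁, h₂, h₃⟩ := (hprod.congr hone).unique (.const 1 x)
  exact ⟨h₁, by linear_combination h₂, by linear_combination h₃⟩

lemma radius_ofScalars_le_radius_ofScalars_mul {m : ℕ → 𝕜} (hm : m =O[atTop] fun _ => (1 : ℝ))
    (a : ℕ → 𝕜) : (ofScalars 𝕜 a).radius ≤ (ofScalars 𝕜 fun n => m n * a n).radius := by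
  refine ENNReal.le_of_forall_nnreal_lt fun r hr => le_radius_of_isBigO _ ?_
  have ha := (isLittleO_one_of_lt_radius _ hr).isBigO
  simpa only [ofScalars_norm, norm_mul, mul_assoc, mul_one] using hm.norm_left.mul ha

variable [CompleteSpace 𝕜]

lemma hasFPowerSeriesAt_ofScalars_of_radius_pos {f : 𝕜 → 𝕜} {a : ℕ → 𝕜}
    (ha : 0 < (ofScalars 𝕜 a).radius) (hf : ∀ᶠ z in 𝓝 0, f z = ∑' n, a n * z ^ n) :
    HasFPowerSeriesAt f (ofScalars 𝕜 a) 0 := by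
  refine ((ofScalars 𝕜 a).hasFPowerSeriesOnBall ha).hasFPowerSeriesAt.congr ?_
  filter_upwards [hf] with z hz
  rw [hz]
  exact congrFun (ofScalarsSum_eq_tsum (E := 𝕜) a) z

-- A single nonzero value away from the origin rules out the junk value of a divergent `tsum`.
lemma hasFPowerSeriesAt_ofScalars_of_eq_tsum {f : 𝕜 → 𝕜} {a : ℕ → 𝕜}
    (hf : ∀ᶠ z in 𝓝 0, f z = ∑' n, a n * z ^ n) (hne : ∃ᶠ z in 𝓝[≠] 0, f z ≠ 0) :
    HasFPowerSeriesAt f (ofScalars 𝕜 a) 0 := by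
  obtain ⟨z, hfz, hsum, hz⟩ :=
    (hne.and_eventually
      ((hf.filter_mono nhdsWithin_le_nhds).and self_mem_nhdsWithin)).exists
  have hsummable : Summable fun n => a n * z ^ n := by
    by_contra hdiv
    exact hfz (hsum.trans (tsum_eq_zero_of_not_summable hdiv))
  have hradius : (‖z‖₊ : ENNReal) ≤ (ofScalars 𝕜 a).radius :=
    le_radius_of_tendsto _ (by simpa using hsummable.tendsto_atTop_zero.norm)
  exact hasFPowerSeriesAt_ofScalars_of_radius_pos
    (lt_of_lt_of_le (by simpa using hz) hradius) hf

lemma hasFPowerSeriesAt_ofScalars_of_eq_tsum_of_ne_zero {f : 𝕜 → 𝕜} {a : ℕ → 𝕜}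
    (hf : ∀ᶠ z in 𝓝 0, f z = ∑' n, a n * z ^ n) (hcont : ContinuousAt f 0) (h0 : f 0 ≠ 0) :
    HasFPowerSeriesAt f (ofScalars 𝕜 a) 0 :=
  hasFPowerSeriesAt_ofScalars_of_eq_tsum hf
    ((hcont.eventually_ne h0).filter_mono nhdsWithin_le_nhds).frequently

end PowerSeries

lemma taylorCoeff_eq_of_hasFPowerSeriesAt {h : ℂ → ℂ} {a : ℕ → ℂ}
    (hh : HasFPowerSeriesAt h (ofScalars ℂ a) 0) : taylorCoeff h = a :=
  ofScalars_series_injective ℂ ℂ (hh.analyticAt.hasFPowerSeriesAt.eq_formalMultilinearSeries hh)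

lemma taylorCoeff_of_leftInverse {f g : ℂ → ℂ} {a : ℕ → ℂ}
    (hf : HasFPowerSeriesAt f (ofScalars ℂ a) 0) (ha0 : a 0 = 0) (ha1 : a 1 = 1)
    (hg : AnalyticAt ℂ g 0) (hgf : ∀ᶠ z in 𝓝 0, g (f z) = z) :
    taylorCoeff g 1 = 1 ∧ taylorCoeff g 2 = -a 2 ∧ taylorCoeff g 3 = 2 * a 2 ^ 2 - a 3 := by
  have hf0 : f 0 = 0 := by
    have h : (ofScalars ℂ a).coeff 0 = f 0 := hf.coeff_zero 1
    simpa [ha0] using h.symm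
  have hgp : HasFPowerSeriesAt g (ofScalars ℂ (taylorCoeff g)) (f 0) :=
    hf0.symm ▸ hg.hasFPowerSeriesAt
  obtain ⟨h₁, h₂, h₃⟩ := coeff_relations_of_leftInverse hf hgp hgf
  simp only [coeff_ofScalars, ha1] at h₁ h₂ h₃
  have hg₁ : taylorCoeff g 1 = 1 := by linear_combination h₁
  have hg₂ : taylorCoeff g 2 = -a 2 := by linear_combination h₂ - a 2 * hg₁
  exact ⟨hg₁, hg₂, by linear_combination h₃ - a 3 * hg₁ - 2 * a 2 * hg₂⟩

section QNumber

variable {q : ℝ}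

lemma symQ_natCast (q : ℝ) (n : ℕ) : symQ q n = (q ^ n - q⁻¹ ^ n) / (q - q⁻¹) := by
  simp only [symQ, Real.rpow_eq_pow, Real.rpow_natCast, Real.rpow_neg_natCast, zpow_neg,
    zpow_natCast, inv_pow]

lemma sub_inv_neg_of_lt_one (hq0 : 0 < q) (hq1 : q < 1) : q - q⁻¹ < 0 :=
  sub_neg.2 (hq1.trans ((one_lt_inv₀ hq0).2 hq1))

lemma symQ_strictMono (hq0 : 0 < q) (hq1 : q < 1) : StrictMono (symQ q) := by
  intro x y hxy
  have hpow := Real.strictAnti_rpow_of_base_lt_one hq0 hq1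
  exact div_lt_div_of_neg_of_lt (sub_inv_neg_of_lt_one hq0 hq1)
    (sub_lt_sub (hpow hxy) (hpow (neg_lt_neg hxy)))

lemma symQ_pos (hq0 : 0 < q) (hq1 : q < 1) {x : ℝ} (hx : 0 < x) : 0 < symQ q x := by
  simpa [symQ] using symQ_strictMono hq0 hq1 hx

lemma one_lt_symQ (hq0 : 0 < q) (hq1 : q < 1) {x : ℝ} (hx : 1 < x) : 1 < symQ q x := by
  have h1 : symQ q 1 = 1 := by
    simpa [div_self (sub_inv_neg_of_lt_one hq0 hq1).ne] using symQ_natCast q 1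
  exact h1 ▸ symQ_strictMono hq0 hq1 hx

variable {η : ℝ}

lemma Lcoef_one (hq0 : 0 < q) (hq1 : q < 1) (hη : -1 < η) : Lcoef q η 1 = 1 := by
  rw [Lcoef, Nat.cast_one]
  exact div_self (symQ_pos hq0 hq1 (by linarith)).ne'

lemma Lcoef_pos (hq0 : 0 < q) (hq1 : q < 1) (hη : -1 < η) {n : ℕ} (hn : 1 ≤ n) :
    0 < Lcoef q η n := by
  have hn' : (1 : ℝ) ≤ n := by exact_mod_cast hn
  exact div_pos (symQ_pos hq0 hq1 (by linarith)) (symQ_pos hq0 hq1 (by linarith))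

lemma Lcoef_le_one (hq0 : 0 < q) (hq1 : q < 1) (hη : -1 < η) {n : ℕ} (hn : 1 ≤ n) :
    Lcoef q η n ≤ 1 := by
  have hn' : (1 : ℝ) ≤ n := by exact_mod_cast hn
  exact (div_le_one (symQ_pos hq0 hq1 (by linarith))).2
    ((symQ_strictMono hq0 hq1).monotone (by linarith))

lemma Lcoef_isBigO_one (hq0 : 0 < q) (hq1 : q < 1) (hη : -1 < η) :
    (fun n => (Lcoef q η n : ℂ)) =O[atTop] fun _ => (1 : ℝ) := by
  refine IsBigO.of_bound 1 ?_
  filter_upwards [eventually_ge_atTop 1] with n hn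
  rw [norm_real, Real.norm_of_nonneg (Lcoef_pos hq0 hq1 hη hn).le]
  simpa using Lcoef_le_one hq0 hq1 hη hn

lemma hasFPowerSeriesAt_Jop (hq0 : 0 < q) (hq1 : q < 1) (hη : -1 < η) {h : ℂ → ℂ}
    (hh : AnalyticAt ℂ h 0) :
    HasFPowerSeriesAt (Jop q η h)
      (ofScalars ℂ fun n => (Lcoef q η n : ℂ) * taylorCoeff h n) 0 :=
  hasFPowerSeriesAt_ofScalars_of_radius_pos
    (hh.hasFPowerSeriesAt.radius_pos.trans_le
      (radius_ofScalars_le_radius_ofScalars_mul (Lcoef_isBigO_one hq0 hq1 hη) _))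
    (.of_forall fun _ => rfl)

end QNumber

section Phi

variable {q η lam mu : ℝ}

lemma Dq_eq_slope (q : ℝ) (H : ℂ → ℂ) {z : ℂ} (hz : z ≠ 0) :
    Dq q H z = (q * slope H 0 (q * z) - (q : ℂ)⁻¹ * slope H 0 ((q : ℂ)⁻¹ * z)) /
      ((q : ℂ) - (q : ℂ)⁻¹) := by
  rcases eq_or_ne q 0 with rfl | hq
  · simp [Dq, hz]
  have hq' : (q : ℂ) ≠ 0 := ofReal_ne_zero.2 hq
  simp only [Dq, hz, if_false, slope_def_field, sub_zero, div_eq_inv_mul z]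
  generalize (q : ℂ) - (q : ℂ)⁻¹ = D
  field_simp
  ring

protected lemma HasQuadraticExpansionAt.Dq (hq : q - q⁻¹ ≠ 0) {H : ℂ → ℂ} {a b c : ℂ}
    (hH : HasQuadraticExpansionAt (slope H 0) 0 a b c) :
    HasQuadraticExpansionAt (Dq q H) 0 a (symQ q 2 * b) (symQ q 3 * c) := by
  have hq0 : (q : ℂ) ≠ 0 := by
    intro h
    simp [ofReal_eq_zero.1 h] at hq
  have hD : (q : ℂ) - (q : ℂ)⁻¹ ≠ 0 := by exact_mod_cast hq
  have hsymQ (n : ℕ) :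
      (symQ q n : ℂ) = ((q : ℂ) ^ n - (q : ℂ)⁻¹ ^ n) / ((q : ℂ) - (q : ℂ)⁻¹) := by
    exact_mod_cast congrArg ofReal (symQ_natCast q n)
  have hscale {k : ℂ} (hk : k ≠ 0) :
      HasQuadraticExpansionAt (fun z => slope H 0 (k * z)) 0 a (k * b) (k ^ 2 * c) :=
    HasQuadraticExpansionAt.comp_const_mul hk (by simpa using hH)
  have hcomb := ((hscale hq0).const_mul (q / ((q : ℂ) - (q : ℂ)⁻¹))).add
    ((hscale (inv_ne_zero hq0)).const_mul (-(q : ℂ)⁻¹ / ((q : ℂ) - (q : ℂ)⁻¹)))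
  have hDq : (fun z => q / ((q : ℂ) - (q : ℂ)⁻¹) * slope H 0 (q * z) +
      -(q : ℂ)⁻¹ / ((q : ℂ) - (q : ℂ)⁻¹) * slope H 0 ((q : ℂ)⁻¹ * z)) =ᶠ[𝓝[≠] 0] Dq q H := by
    filter_upwards [self_mem_nhdsWithin] with z hz
    rw [Dq_eq_slope q H hz]
    ring
  have hsymQ_two := hsymQ 2
  have hsymQ_three := hsymQ 3
  rw [Nat.cast_ofNat] at hsymQ_two hsymQ_three
  convert hcomb.congr hDq using 1
  · linear_combination -a * mul_inv_cancel₀ hD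
  · rw [hsymQ_two]
    ring
  · rw [hsymQ_three]
    ring

lemma hasQuadraticExpansionAt_slope_Jop (hq0 : 0 < q) (hq1 : q < 1) (hη : -1 < η) {h : ℂ → ℂ}
    (hh : AnalyticAt ℂ h 0) (hh1 : taylorCoeff h 1 = 1) :
    HasQuadraticExpansionAt (slope (Jop q η h) 0) 0 1 (Lcoef q η 2 * taylorCoeff h 2)
      (Lcoef q η 3 * taylorCoeff h 3) := by
  simpa [hh1, Lcoef_one hq0 hq1 hη] using
    (HasQuadraticExpansionAt.dslope_of_hasFPowerSeriesAt
      (hasFPowerSeriesAt_Jop hq0 hq1 hη hh)).congr (dslope_eventuallyEq_slope_nhdsNE _)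

/-- The coefficient of `a₂ z` in the expansion of `Phi` for `f = z + a₂ z² + a₃ z³ + ⋯`. -/
noncomputable def linearWeight (q η lam mu : ℝ) : ℝ :=
  lam * symQ q 2 * M2v q mu * Lcoef q η 2

/-- The coefficient of `a₂² z²` in the expansion of `Phi` for `f = z + a₂ z² + a₃ z³ + ⋯`. -/
noncomputable def squareWeight (q η lam mu : ℝ) : ℝ :=
  lam * (lam * M2v q mu ^ 2 - N2v q mu) * symQ q 2 ^ 2 * Lcoef q η 2 ^ 2 / 2

/-- The coefficient of `a₃ z²` in the expansion of `Phi` for `f = z + a₂ z² + a₃ z³ + ⋯`. -/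
noncomputable def cubicWeight (q η lam mu : ℝ) : ℝ :=
  (lam * symQ q 3 - 1) * M3v q mu * Lcoef q η 3

lemma hasQuadraticExpansionAt_Phi (hq0 : 0 < q) (hq1 : q < 1) (hη : -1 < η) {h : ℂ → ℂ}
    (hh : AnalyticAt ℂ h 0) (hh1 : taylorCoeff h 1 = 1) :
    HasQuadraticExpansionAt (Phi q η lam mu h) 0 1 (linearWeight q η lam mu * taylorCoeff h 2)
      (cubicWeight q η lam mu * taylorCoeff h 3 +
        squareWeight q η lam mu * taylorCoeff h 2 ^ 2) := by
  have hq := (sub_inv_neg_of_lt_one hq0 hq1).ne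
  have hJ := hasQuadraticExpansionAt_slope_Jop hq0 hq1 hη hh hh1
  have hodd := hJ.slope_sub_comp_neg
  rw [mul_one] at hodd
  have hDodd := hodd.Dq hq
  rw [mul_zero] at hDodd
  have hDJ := hJ.Dq hq
  have hquot : (fun z => 2 * Dq q (Jop q η h) z ^ (lam : ℂ) /
      slope (fun ζ => Jop q η h ζ - Jop q η h (-ζ)) 0 z) =ᶠ[𝓝[≠] 0]
      fun z => 2 * z * Dq q (Jop q η h) z ^ (lam : ℂ) / (Jop q η h z - Jop q η h (-z)) := by
    filter_upwards with z
    simp only [slope_def_field, neg_zero, sub_self, sub_zero]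
    rw [div_div_eq_mul_div, mul_right_comm]
  have hslope : Dq q (Jop q η h) =ᶠ[𝓝[≠] 0] slope (fun ζ => ζ * Dq q (Jop q η h) ζ) 0 := by
    filter_upwards [self_mem_nhdsWithin] with z (hz : z ≠ 0)
    simp [slope_def_field, hz]
  have hstar := (hDJ.two_mul_cpow_div hodd lam).congr hquot
  have hconvex := ((hDJ.congr hslope).Dq hq).two_mul_cpow_div hDodd lam
  convert (hstar.cpow mu).mul (hconvex.cpow ((1 - mu : ℝ) : ℂ)) using 1
  · rfl
  · rw [one_mul]
  · simp only [linearWeight, M2v]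
    push_cast
    ring
  · simp only [cubicWeight, squareWeight, M2v, M3v, N2v]
    push_cast
    ring

end Phi

lemma coeff_relations_of_subordination {𝕜 : Type*} [NontriviallyNormedField 𝕜] [NeZero (2 : 𝕜)]
    {F φ u : 𝕜 → 𝕜} {E c : ℕ → 𝕜} {F₀ F₁ F₂ : 𝕜}
    (hF : HasQuadraticExpansionAt F 0 F₀ F₁ F₂) (hφ : HasFPowerSeriesAt φ (ofScalars 𝕜 E) 0)
    (hc : HasFPowerSeriesAt (fun z => (1 + u z) / (1 - u z)) (ofScalars 𝕜 c) 0) (hc0 : c 0 = 1)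
    (hsub : F =ᶠ[𝓝[≠] 0] fun z => φ (u z)) :
    F₁ = E 1 * (c 1 / 2) ∧
      F₂ = E 1 * (c 2 / 2 - c 1 ^ 2 / 4) + E 2 * (c 1 / 2) ^ 2 := by
  have hcayley := HasQuadraticExpansionAt.of_hasFPowerSeriesAt hc
  have hφexp := HasQuadraticExpansionAt.of_hasFPowerSeriesAt hφ
  have hφ0 : (ofScalars 𝕜 E).coeff 0 = φ 0 := hφ.coeff_zero 1
  simp only [coeff_ofScalars, hc0] at hcayley hφexp hφ0
  exact ((hF.congr hsub).unique (hφexp.comp hφ0.symm hcayley.of_cayley)).2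

section CoefficientAlgebra

variable {K : Type*} [Field K] [CharZero K] {m n p e E₂ a₂ a₃ c₁ c₂ d₁ d₂ : K}

lemma mul_sq_and_mul_sub_sq_of_coeff_relations (he : e ≠ 0)
    (hf₁ : m * a₂ = e * (c₁ / 2)) (hg₁ : m * -a₂ = e * (d₁ / 2))
    (hf₂ : p * a₃ + n * a₂ ^ 2 = e * (c₂ / 2 - c₁ ^ 2 / 4) + E₂ * (c₁ / 2) ^ 2)
    (hg₂ : p * (2 * a₂ ^ 2 - a₃) + n * (-a₂) ^ 2 =
      e * (d₂ / 2 - d₁ ^ 2 / 4) + E₂ * (d₁ / 2) ^ 2) :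
    4 * ((p + n) * e ^ 2 + m ^ 2 * (e - E₂)) * a₂ ^ 2 = e ^ 3 * (c₂ + d₂) ∧
      4 * p * (a₃ - a₂ ^ 2) = e * (c₂ - d₂) := by
  obtain rfl : d₁ = -c₁ := mul_left_cancel₀ he (by linear_combination -2 * hf₁ - 2 * hg₁)
  constructor
  · linear_combination 2 * e ^ 2 * (hf₂ + hg₂) + (e - E₂) * (2 * e * c₁ + 4 * m * a₂) * hf₁
  · linear_combination 2 * (hf₂ - hg₂)

lemma sub_mul_sq_eq_div {Θ : K} (hp : p ≠ 0) (hΘ : Θ ≠ 0)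
    (hsq : 2 * Θ * a₂ ^ 2 = e ^ 3 * (c₂ + d₂)) (hsub : 4 * p * (a₃ - a₂ ^ 2) = e * (c₂ - d₂))
    (ρ : K) :
    a₃ - ρ * a₂ ^ 2 = e * ((2 * (1 - ρ) * e ^ 2 * p + Θ) * c₂ +
      (2 * (1 - ρ) * e ^ 2 * p - Θ) * d₂) / (4 * p * Θ) := by
  rw [eq_div_iff (by simp [hp, hΘ])]
  linear_combination Θ * hsub + 2 * (1 - ρ) * p * hsq

end CoefficientAlgebra

lemma Thetav_eq_weights (q η lam mu E1 : ℝ) (E : ℕ → ℂ) :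
    Thetav q η lam mu E1 E = 2 * ((cubicWeight q η lam mu + squareWeight q η lam mu) * E1 ^ 2 +
      linearWeight q η lam mu ^ 2 * (E1 - E 2)) := by
  simp only [Thetav, cubicWeight, squareWeight, linearWeight]
  push_cast
  ring

theorem fekete_szego_identity_bernardi_general {q η lam mu E1 : ℝ} {f g φ u v : ℂ → ℂ}
    {a E c d : ℕ → ℂ} (hq0 : 0 < q) (hq1 : q < 1) (hη : -1 < η)
    (hf : HasFPowerSeriesAt f (ofScalars ℂ a) 0) (ha0 : a 0 = 0) (ha1 : a 1 = 1)
    (hg : AnalyticAt ℂ g 0) (hgf : ∀ᶠ z in 𝓝 0, g (f z) = z)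
    (hφ : HasFPowerSeriesAt φ (ofScalars ℂ E) 0) (hE1 : E 1 = E1) (hE1_ne : E1 ≠ 0)
    (hcubic : cubicWeight q η lam mu ≠ 0) (hΘ : Thetav q η lam mu E1 E ≠ 0)
    (hsubf : Phi q η lam mu f =ᶠ[𝓝[≠] 0] fun z => φ (u z))
    (hsubg : Phi q η lam mu g =ᶠ[𝓝[≠] 0] fun w => φ (v w))
    (hc : HasFPowerSeriesAt (fun z => (1 + u z) / (1 - u z)) (ofScalars ℂ c) 0) (hc0 : c 0 = 1)
    (hd : HasFPowerSeriesAt (fun w => (1 + v w) / (1 - v w)) (ofScalars ℂ d) 0) (hd0 : d 0 = 1)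
    (ρ : ℂ) :
    a 3 - ρ * a 2 ^ 2 =
      E1 * ((2 * (1 - ρ) * E1 ^ 2 * cubicWeight q η lam mu + Thetav q η lam mu E1 E) * c 2 +
          (2 * (1 - ρ) * E1 ^ 2 * cubicWeight q η lam mu - Thetav q η lam mu E1 E) * d 2) /
        (4 * cubicWeight q η lam mu * Thetav q η lam mu E1 E) := by
  have hfa := taylorCoeff_eq_of_hasFPowerSeriesAt hf
  obtain ⟨hg1, hg2, hg3⟩ := taylorCoeff_of_leftInverse hf ha0 ha1 hg hgf
  obtain ⟨hf₁, hf₂⟩ := coeff_relations_of_subordination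
    (hasQuadraticExpansionAt_Phi hq0 hq1 hη hf.analyticAt (by rw [hfa, ha1])) hφ hc hc0 hsubf
  obtain ⟨hg₁, hg₂⟩ := coeff_relations_of_subordination
    (hasQuadraticExpansionAt_Phi hq0 hq1 hη hg hg1) hφ hd hd0 hsubg
  rw [hE1] at hf₁ hf₂ hg₁ hg₂
  rw [hfa] at hf₁ hf₂
  rw [hg2] at hg₁
  rw [hg2, hg3] at hg₂
  obtain ⟨hsq, hsub⟩ :=
    mul_sq_and_mul_sub_sq_of_coeff_relations (ofReal_ne_zero.2 hE1_ne) hf₁ hg₁ hf₂ hg₂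
  have hΘsq : 2 * Thetav q η lam mu E1 E * a 2 ^ 2 = E1 ^ 3 * (c 2 + d 2) := by
    rw [Thetav_eq_weights]
    linear_combination hsq
  exact sub_mul_sq_eq_div (ofReal_ne_zero.2 hcubic) hΘ hΘsq hsub ρ

lemma cubicWeight_ne_zero {q η lam mu : ℝ} (hq0 : 0 < q) (hq1 : q < 1) (hη : -1 < η)
    (hlam : 1 ≤ lam) (hM3 : M3v q mu ≠ 0) : cubicWeight q η lam mu ≠ 0 := by
  have hq3 : 1 < symQ q 3 := one_lt_symQ hq0 hq1 (by norm_num)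
  have hlam3 : 1 < lam * symQ q 3 := one_lt_mul_of_le_of_lt hlam hq3
  exact mul_ne_zero (mul_ne_zero (sub_pos.2 hlam3).ne' hM3)
    (Lcoef_pos hq0 hq1 hη (by norm_num)).ne'

lemma IsSchwarz.hasFPowerSeriesAt_cayley {u : ℂ → ℂ} {c : ℕ → ℂ} (hu : IsSchwarz u)
    (hc : ∀ z ∈ ball (0 : ℂ) 1, (1 + u z) / (1 - u z) = ∑' n, c n * z ^ n) :
    HasFPowerSeriesAt (fun z => (1 + u z) / (1 - u z)) (ofScalars ℂ c) 0 := by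
  obtain ⟨hanalytic, hu0, -⟩ := hu
  have hcont : ContinuousAt u 0 := (hanalytic 0 (mem_ball_self one_pos)).continuousAt
  refine hasFPowerSeriesAt_ofScalars_of_eq_tsum_of_ne_zero
    (eventually_of_mem (ball_mem_nhds 0 one_pos) hc) ?_ (by simp [hu0])
  exact (continuousAt_const.add hcont).div (continuousAt_const.sub hcont) (by simp [hu0])

theorem fekete_szego_identity_bernardi
    (q : ℝ) (hq0 : 0 < q) (hq1 : q < 1)
    (f g : ℂ → ℂ) (a : ℕ → ℂ)
    (hf : AnalyticOnNhd ℂ f (ball 0 1)) (hf0 : f 0 = 0) (hf'0 : deriv f 0 = 1)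
    (hfa : ∀ z ∈ ball (0 : ℂ) 1, f z = ∑' n, a n * z ^ n)
    (ha0 : a 0 = 0) (ha1 : a 1 = 1)
    (hfinj : InjOn f (ball 0 1))
    (hg : AnalyticOnNhd ℂ g (ball 0 1)) (hg0 : g 0 = 0)
    (hginj : InjOn g (ball 0 1))
    (hgf : ∀ᶠ z in nhds (0 : ℂ), g (f z) = z)
    (φ : ℂ → ℂ) (E : ℕ → ℂ) (E1 : ℝ)
    (hφa : AnalyticOnNhd ℂ φ (ball 0 1)) (hφ0 : φ 0 = 1)
    (hφre : ∀ z ∈ ball (0 : ℂ) 1, 0 < (φ z).re)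
    (hφE : ∀ z ∈ ball (0 : ℂ) 1, φ z = ∑' n, E n * z ^ n)
    (hE0 : E 0 = 1) (hE1 : E 1 = (E1 : ℂ)) (hE1pos : 0 < E1)
    (lam : ℝ) (hlam : 1 ≤ lam)
    (η : ℝ) (hη : -1 < η)
    (mu : ℝ) (hmu : 0 ≤ mu)
    (hM3 : M3v q mu ≠ 0) (hΘ : Thetav q η lam mu E1 E ≠ 0)
    (u v : ℂ → ℂ) (hu : IsSchwarz u) (hv : IsSchwarz v)
    (hsubf : ∀ z ∈ ball (0 : ℂ) 1, z ≠ 0 → Phi q η lam mu f z = φ (u z))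
    (hsubg : ∀ w ∈ ball (0 : ℂ) 1, w ≠ 0 → Phi q η lam mu g w = φ (v w))
    (c d : ℕ → ℂ) (hc0 : c 0 = 1) (hd0 : d 0 = 1)
    (hc : ∀ z ∈ ball (0 : ℂ) 1, (1 + u z) / (1 - u z) = ∑' n, c n * z ^ n)
    (hd : ∀ w ∈ ball (0 : ℂ) 1, (1 + v w) / (1 - v w) = ∑' n, d n * w ^ n)
    (ρ : ℝ) :
    a 3 - (ρ : ℂ) * a 2 ^ 2 =
      (E1 : ℂ) *
          ((((2 * (1 - ρ) * E1 ^ 2 * (lam * symQ q 3 - 1) * M3v q mu * Lcoef q η 3 : ℝ) : ℂ) +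
                Thetav q η lam mu E1 E) * c 2 +
            (((2 * (1 - ρ) * E1 ^ 2 * (lam * symQ q 3 - 1) * M3v q mu * Lcoef q η 3 : ℝ) : ℂ) -
                Thetav q η lam mu E1 E) * d 2) /
        (4 * ((lam : ℂ) * (symQ q 3 : ℂ) - 1) * (M3v q mu : ℂ) * (Lcoef q η 3 : ℂ) *
          Thetav q η lam mu E1 E) := by
  have hball : ball (0 : ℂ) 1 ∈ 𝓝 0 := ball_mem_nhds 0 one_pos
  have h0 : (0 : ℂ) ∈ ball 0 1 := mem_ball_self one_pos
  have hderiv : HasDerivAt f 1 0 := hf'0 ▸ (hf 0 h0).differentiableAt.hasDerivAt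
  have hfp : HasFPowerSeriesAt f (ofScalars ℂ a) 0 :=
    hasFPowerSeriesAt_ofScalars_of_eq_tsum (eventually_of_mem hball hfa)
      (hderiv.eventually_ne one_ne_zero).frequently
  have hφp : HasFPowerSeriesAt φ (ofScalars ℂ E) 0 :=
    hasFPowerSeriesAt_ofScalars_of_eq_tsum_of_ne_zero (eventually_of_mem hball hφE)
      (hφa 0 h0).continuousAt (by simp [hφ0])
  have hpunctured : ∀ᶠ z : ℂ in 𝓝[≠] 0, z ∈ ball 0 1 ∧ z ≠ 0 :=
    (eventually_of_mem (mem_nhdsWithin_of_mem_nhds hball) fun _ => id).and self_mem_nhdsWithin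
  have hidentity := fekete_szego_identity_bernardi_general hq0 hq1 hη hfp ha0 ha1 (hg 0 h0) hgf
    hφp hE1 hE1pos.ne' (cubicWeight_ne_zero hq0 hq1 hη hlam hM3) hΘ
    (hpunctured.mono fun z hz => hsubf z hz.1 hz.2) (hpunctured.mono fun w hw => hsubg w hw.1 hw.2)
    (hu.hasFPowerSeriesAt_cayley hc) hc0 (hv.hasFPowerSeriesAt_cayley hd) hd0 ρ
  simpa [cubicWeight, mul_assoc] using hidentity
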